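/- Let Q be a difference field extension of k with A ∈ GLₙ(k) and U ∈ GLₙ(Q) a fundamental matrix with ρ(U) = AU and Q^ρ = C. Then for every automorphism σ of Q over k commuting with ρ, the matrix U⁻¹σ(U) lies in GLₙ(C), and the map σ ↦ U⁻¹σ(U) is an injective group homomorphism from the group of such automorphisms to GLₙ(C), provided Q is generated over k by the entries of U and 1/det(U). -/

import Mathlib

/-!
Write `B τ = U⁻¹ τ(U)`, so that `τ(U) = U * B τ`. Applying `σ` to this identity and using
`σ(τ(U)) = τ(A U) = A τ(U)` gives `(A U) σ(B τ) = (A U) (B τ)`, and `A U` can be cancelled: `B τ` has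
entries in `C = Q^σ`. Since `C ⊆ k`, these entries are fixed by every `τ₁` in the Galois group, so
applying `τ₁` to `τ₂(U) = U * B τ₂` gives `τ₁τ₂(U) = U * B τ₁ * B τ₂`. Finally `B τ` determines
`τ(U)`, hence `τ` on the generators of `Q` over `k`.
-/

open Matrix in
/-- The matrix `U⁻¹ τ(U)` is fixed entrywise by `σ`: both `U` and `τ(U)` solve `σ(Y) = A Y`. -/
theorem cocycle_map_eq {Q : Type*} [Field Q] (σ τ : Q ≃+* Q) {n : ℕ}
    (A U : Matrix (Fin n) (Fin n) Q) (hAdet : IsUnit A.det) (hUdet : IsUnit U.det)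
    (hU : U.map ⇑σ = A * U) (hA : ∀ i j, τ (A i j) = A i j)
    (hτ : ∀ x : Q, τ (σ x) = σ (τ x)) :
    (U⁻¹ * U.map ⇑τ).map ⇑σ = U⁻¹ * U.map ⇑τ := by
  have hAU : IsUnit (A * U) := by
    rw [isUnit_iff_isUnit_det, det_mul]
    exact hAdet.mul hUdet
  have hAτ : A.map ⇑τ = A := by
    ext i j
    exact hA i j
  have hcomm : (U.map ⇑τ).map ⇑σ = (U.map ⇑σ).map ⇑τ := by
    ext i j
    exact (hτ _).symm
  apply hAU.mul_left_cancel
  calc A * U * (U⁻¹ * U.map ⇑τ).map ⇑σ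
      = (U * (U⁻¹ * U.map ⇑τ)).map ⇑σ := by rw [← hU, Matrix.map_mul (L := U)]
    _ = (U.map ⇑σ).map ⇑τ := by rw [mul_nonsing_inv_cancel_left _ _ hUdet, hcomm]
    _ = A * U.map ⇑τ := by rw [hU, Matrix.map_mul, hAτ]
    _ = A * U * (U⁻¹ * U.map ⇑τ) := by
      rw [Matrix.mul_assoc, mul_nonsing_inv_cancel_left _ _ hUdet]


/-- for a difference field extension `k ⊆ Q` (with automorphism
`σ`, no new constants: `Q^σ ⊆ k`), a system `σ(U) = A U` with `A` over `k` and
`U ∈ GLₙ(Q)`, every `τ ∈ Gal(Q|k)` (fixing `k` and commuting with `σ`) gives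
`U⁻¹ τ(U) ∈ GLₙ(C)` where `C = Q^σ`; and `τ ↦ U⁻¹ τ(U)` is multiplicative and
injective provided `Q` is generated over `k` by the entries of `U`. -/
theorem galois_representation {Q : Type*} [Field Q] (σ : Q ≃+* Q) (k : Subfield Q)
    (hk : ∀ x ∈ k, σ x ∈ k) (hC : ∀ x : Q, σ x = x → x ∈ k)
    (n : ℕ) (A U : Matrix (Fin n) (Fin n) Q)
    (hAk : ∀ i j, A i j ∈ k) (hAdet : IsUnit A.det) (hUdet : IsUnit U.det)
    (hU : U.map ⇑σ = A * U)
    (hgen : Subfield.closure ((k : Set Q) ∪ {x : Q | ∃ i j, U i j = x}) = ⊤) :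
    (∀ τ : Q ≃+* Q, (∀ x ∈ k, τ x = x) → (∀ x : Q, τ (σ x) = σ (τ x)) →
        (∀ i j, σ ((U⁻¹ * U.map ⇑τ) i j) = (U⁻¹ * U.map ⇑τ) i j) ∧
          IsUnit (U⁻¹ * U.map ⇑τ).det) ∧
    (∀ τ₁ τ₂ : Q ≃+* Q, (∀ x ∈ k, τ₁ x = x) → (∀ x : Q, τ₁ (σ x) = σ (τ₁ x)) →
        (∀ x ∈ k, τ₂ x = x) → (∀ x : Q, τ₂ (σ x) = σ (τ₂ x)) →
        U⁻¹ * U.map (⇑τ₁ ∘ ⇑τ₂) = (U⁻¹ * U.map ⇑τ₁) * (U⁻¹ * U.map ⇑τ₂)) ∧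
    (∀ τ₁ τ₂ : Q ≃+* Q, (∀ x ∈ k, τ₁ x = x) → (∀ x : Q, τ₁ (σ x) = σ (τ₁ x)) →
        (∀ x ∈ k, τ₂ x = x) → (∀ x : Q, τ₂ (σ x) = σ (τ₂ x)) →
        U⁻¹ * U.map ⇑τ₁ = U⁻¹ * U.map ⇑τ₂ → τ₁ = τ₂) := by
  have hfix : ∀ τ : Q ≃+* Q, (∀ x ∈ k, τ x = x) → (∀ x : Q, τ (σ x) = σ (τ x)) →
      ∀ i j, σ ((U⁻¹ * U.map ⇑τ) i j) = (U⁻¹ * U.map ⇑τ) i j := fun τ hτk hτ i j =>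
    congrFun (congrFun (cocycle_map_eq σ τ A U hAdet hUdet hU (fun i j => hτk _ (hAk i j)) hτ) i) j
  refine ⟨fun τ hτk hτ => ⟨hfix τ hτk hτ, ?_⟩, ?_, ?_⟩
  · have hdet : (U.map ⇑τ).det = τ U.det := (RingEquiv.map_det τ U).symm
    rw [Matrix.det_mul, hdet]
    exact (Matrix.isUnit_nonsing_inv_det U hUdet).mul (hUdet.map τ)
  · intro τ₁ τ₂ hk₁ h₁ hk₂ h₂
    -- The entries of `U⁻¹ τ₂(U)` are constants, hence lie in `k` and are fixed by `τ₁`.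
    have hB : (U⁻¹ * U.map ⇑τ₂).map ⇑τ₁ = U⁻¹ * U.map ⇑τ₂ := by
      ext i j
      exact hk₁ _ (hC _ (hfix τ₂ hk₂ h₂ i j))
    have hcomp : U.map (⇑τ₁ ∘ ⇑τ₂) = U.map ⇑τ₁ * (U⁻¹ * U.map ⇑τ₂) := by
      calc U.map (⇑τ₁ ∘ ⇑τ₂) = (U * (U⁻¹ * U.map ⇑τ₂)).map ⇑τ₁ := by
            rw [Matrix.mul_nonsing_inv_cancel_left _ _ hUdet, Matrix.map_map]
        _ = U.map ⇑τ₁ * (U⁻¹ * U.map ⇑τ₂) := by rw [Matrix.map_mul, hB]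
    rw [hcomp, Matrix.mul_assoc U⁻¹]
  · intro τ₁ τ₂ hk₁ _ hk₂ _ h
    have hUU : U.map ⇑τ₁ = U.map ⇑τ₂ := by
      simpa only [Matrix.mul_nonsing_inv_cancel_left _ _ hUdet] using congrArg (U * ·) h
    have hgens : Set.EqOn (τ₁ : Q →+* Q) (τ₂ : Q →+* Q)
        ((k : Set Q) ∪ {x : Q | ∃ i j, U i j = x}) := by
      rintro x (hx | ⟨i, j, rfl⟩)
      · exact (hk₁ x hx).trans (hk₂ x hx).symm
      · exact congrFun (congrFun hUU i) j
    have htop := RingHom.eqOn_field_closure hgens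
    rw [hgen] at htop
    exact RingEquiv.ext fun x => htop (Subfield.mem_top x)
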